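/- Completeness: Let p, q, r ∈ (0,∞], l ∈ ℕ, α₃ ≥ 0, α₁, α₂ ∈ ℝ, σ₁, σ₂ ∈ (0,∞], and let {t_k} ∈ X^{α₃}_{α,σ,p} be a p-admissible weight sequence. Then the space B̃^l_{p,q,r}(ℝⁿ,{t_k}), with functions identified when equal almost everywhere, is complete with respect to its quasi-norm: every Cauchy sequence in the quasi-norm converges in the quasi-norm to an element of the space. -/

import Mathlib

open MeasureTheory ENNReal Filter
open scoped Classical

noncomputable section

/-- `ℓ_q` quasinorm of a family of extended nonnegative reals (supremum when `q = ∞`). -/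
def lqNorm {ι : Type*} (q : ℝ≥0∞) (c : ι → ℝ≥0∞) : ℝ≥0∞ :=
  if q = ∞ then ⨆ i, c i else (∑' i, c i ^ q.toReal) ^ (1 / q.toReal)

/-- `L_p` quasinorm of an `ℝ≥0∞`-valued function (essential supremum when `p = ∞`). -/
def lpNormE {α : Type*} [MeasurableSpace α] (p : ℝ≥0∞) (μ : Measure α) (f : α → ℝ≥0∞) : ℝ≥0∞ :=
  if p = ∞ then essSup f μ else (∫⁻ x, f x ^ p.toReal ∂μ) ^ (1 / p.toReal)

abbrev Rn (n : ℕ) := Fin n → ℝ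

/-- Open cube centred at `x` of half-side `s` (i.e. `x + s·Iⁿ`). -/
def openCube {n : ℕ} (x : Rn n) (s : ℝ) : Set (Rn n) := {y | ∀ i, |y i - x i| < s}

/-- Open axis-parallel cube with lower corner `c` and side `s`. -/
def cubeAt {n : ℕ} (c : Rn n) (s : ℝ) : Set (Rn n) := {x | ∀ i, c i < x i ∧ x i < c i + s}

/-- Open dyadic cube `Q^n_{k,m}` of side `2^{-k}`. -/
def dyadicCube (n k : ℕ) (m : Fin n → ℤ) : Set (Rn n) :=
  {x | ∀ i, (m i : ℝ) / 2 ^ k < x i ∧ x i < ((m i : ℝ) + 1) / 2 ^ k}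

/-- Half-open dyadic cube `Q̃^n_{k,m}`. -/
def dyadicCubeHalf (n k : ℕ) (m : Fin n → ℤ) : Set (Rn n) :=
  {x | ∀ i, (m i : ℝ) / 2 ^ k ≤ x i ∧ x i < ((m i : ℝ) + 1) / 2 ^ k}

def dyadicCenter (n k : ℕ) (m : Fin n → ℤ) : Rn n := fun i => ((m i : ℝ) + 1 / 2) / 2 ^ k

/-- The concentric dilate `c·Q^n_{k,m}` of a dyadic cube. -/
def dilatedCube (n k : ℕ) (m : Fin n → ℤ) (c : ℝ) : Set (Rn n) :=
  openCube (dyadicCenter n k m) (c / 2 ^ (k + 1))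

def euclNorm {d : ℕ} (y : Rn d) : ℝ := Real.sqrt (∑ i, y i ^ 2)

/-- The difference `Δ^l(h)g(x)`. -/
def diffl {n : ℕ} (l : ℕ) (h : Rn n) (g : Rn n → ℝ) (x : Rn n) : ℝ :=
  ∑ j ∈ Finset.range (l + 1), ((l.choose j : ℝ) * (-1 : ℝ) ^ (l + j)) * g (x + (j : ℝ) • h)

/-- The difference `Δ^l(h,Ω)g(x)`, vanishing unless the segment `[x, x + l·h]` lies in `Ω`. -/
def difflOn {n : ℕ} (l : ℕ) (Ω : Set (Rn n)) (h : Rn n) (g : Rn n → ℝ) (x : Rn n) : ℝ :=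
  if ∀ τ ∈ Set.Icc (0 : ℝ) 1, x + (τ * l) • h ∈ Ω then diffl l h g x else 0

/-- `δ^l_r(Q)g`, where `s` is the side length of the cube `Q`. -/
def deltaE (n l : ℕ) (r : ℝ≥0∞) (s : ℝ) (Q : Set (Rn n)) (g : Rn n → ℝ) : ℝ≥0∞ :=
  ENNReal.ofReal s ^ (-(2 * (n : ℝ)) / r.toReal) *
    eLpNorm (fun hx : Rn n × Rn n => diffl l hx.1 g hx.2) r
      ((volume.restrict (openCube (0 : Rn n) s)).prod (volume.restrict Q))

/-- `δ^l_r(Q,Ω)g`, where `s` is the side length of the cube `Q`. -/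
def deltaEOn (n l : ℕ) (r : ℝ≥0∞) (s : ℝ) (Q Ω : Set (Rn n)) (g : Rn n → ℝ) : ℝ≥0∞ :=
  ENNReal.ofReal s ^ (-(2 * (n : ℝ)) / r.toReal) *
    eLpNorm (fun hx : Rn n × Rn n => difflOn l Ω hx.1 g hx.2) r
      ((volume.restrict (openCube (0 : Rn n) s)).prod (volume.restrict Q))

/-- `Δ̄^l_r(s)g(x)`. -/
def barDelta (n l : ℕ) (r : ℝ≥0∞) (s : ℝ) (g : Rn n → ℝ) (x : Rn n) : ℝ≥0∞ :=
  ENNReal.ofReal s ^ (-(n : ℝ) / r.toReal) *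
    eLpNorm (fun h : Rn n => diffl l h g x) r (volume.restrict (openCube (0 : Rn n) s))

/-- Membership in `L_r^{loc}(ℝⁿ)`. -/
def MemLrLoc (n : ℕ) (r : ℝ≥0∞) (φ : Rn n → ℝ) : Prop :=
  Measurable φ ∧ ∀ K : Set (Rn n), IsCompact K → eLpNorm φ r (volume.restrict K) < ∞

def IsWeight {n : ℕ} (w : Rn n → ℝ) : Prop := Measurable w ∧ ∀ x, 0 < w x

/-- A `p`-admissible weight sequence. -/
def pAdmissible (n : ℕ) (p : ℝ≥0∞) (t : ℕ → Rn n → ℝ) : Prop :=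
  ∀ k, IsWeight (t k) ∧ MemLrLoc n p (t k)

/-- The multiple sequence `t_{k,m} = ‖t_k‖_{L_p(Q^n_{k,m})}` associated with a weight sequence. -/
def tkm (n : ℕ) (p : ℝ≥0∞) (t : ℕ → Rn n → ℝ) (k : ℕ) (m : Fin n → ℤ) : ℝ≥0∞ :=
  eLpNorm (t k) p (volume.restrict (dyadicCube n k m))

/-- The weight `t̄_k` built from a multiple sequence `T`. -/
def tbarOf (n : ℕ) (p : ℝ≥0∞) (T : ℕ → (Fin n → ℤ) → ℝ≥0∞) (k : ℕ) (x : Rn n) : ℝ≥0∞ :=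
  (2 : ℝ≥0∞) ^ (((k * n : ℕ) : ℝ) / p.toReal) *
    ∑' m : Fin n → ℤ, (dyadicCubeHalf n k m).indicator (fun _ => T k m) x

/-- `(2^{kn} ∫_Q f^e)^{1/e}`, with the essential supremum modification for `e = ∞`. -/
def avgNorm (n k : ℕ) (e : ℝ≥0∞) (Q : Set (Rn n)) (f : Rn n → ℝ≥0∞) : ℝ≥0∞ :=
  if e = ∞ then essSup f (volume.restrict Q)
  else ((2 : ℝ≥0∞) ^ (k * n) * ∫⁻ x in Q, f x ^ e.toReal) ^ (1 / e.toReal)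

/-- Conditions (2.14)–(2.16) of the class `X^{α₃}_{α,σ,p}`, expressed for a multiple
sequence `T`. -/
def MemXseq (n : ℕ) (α₁ α₂ α₃ : ℝ) (σ₁ σ₂ p : ℝ≥0∞) (T : ℕ → (Fin n → ℤ) → ℝ≥0∞) : Prop :=
  (∃ C₁ : ℝ≥0∞, 0 < C₁ ∧ C₁ < ∞ ∧ ∀ k j : ℕ, k ≤ j → ∀ m : Fin n → ℤ,
    avgNorm n k p (dyadicCube n k m) (tbarOf n p T k) *
      avgNorm n k σ₁ (dyadicCube n k m) (fun x => (tbarOf n p T j x)⁻¹) ≤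
      C₁ * (2 : ℝ≥0∞) ^ (α₁ * ((k : ℝ) - (j : ℝ)))) ∧
  (∃ C₂ : ℝ≥0∞, 0 < C₂ ∧ C₂ < ∞ ∧ ∀ k j : ℕ, k ≤ j → ∀ m : Fin n → ℤ,
    (avgNorm n k p (dyadicCube n k m) (tbarOf n p T k))⁻¹ *
      avgNorm n k σ₂ (dyadicCube n k m) (tbarOf n p T j) ≤
      C₂ * (2 : ℝ≥0∞) ^ (α₂ * ((j : ℝ) - (k : ℝ)))) ∧
  (∀ k : ℕ, ∀ m m' : Fin n → ℤ, (∀ i, |m i - m' i| ≤ 1) →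
    0 < T k m ∧ T k m ≤ (2 : ℝ≥0∞) ^ (α₃ : ℝ) * T k m')

/-- The weighted class `X^{α₃}_{α,σ,p}` of weight sequences. -/
def MemX (n : ℕ) (α₁ α₂ α₃ : ℝ) (σ₁ σ₂ p : ℝ≥0∞) (t : ℕ → Rn n → ℝ) : Prop :=
  pAdmissible n p t ∧ MemXseq n α₁ α₂ α₃ σ₁ σ₂ p (tkm n p t)

/-- Quasinorm of `B̃^l_{p,q,r}(ℝⁿ, T)` with an `ℝ≥0∞`-valued weight sequence `T`. -/
def tildeBnormE (n l : ℕ) (p q r : ℝ≥0∞) (T : ℕ → Rn n → ℝ≥0∞) (φ : Rn n → ℝ) : ℝ≥0∞ :=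
  lqNorm q (fun k : ℕ =>
    lpNormE p volume (fun x =>
      T (k + 1) x *
        deltaE n l r ((2 : ℝ) ^ (1 - ((k : ℤ) + 1))) (openCube x ((2 : ℝ) ^ (-((k : ℤ) + 1)))) φ)) +
  lpNormE p volume (fun x => T 0 x * eLpNorm φ r (volume.restrict (openCube x 1)))

/-- Quasinorm of `B̃^l_{p,q,r}(ℝⁿ, {t_k})`. -/
def tildeBnorm (n l : ℕ) (p q r : ℝ≥0∞) (t : ℕ → Rn n → ℝ) (φ : Rn n → ℝ) : ℝ≥0∞ :=
  tildeBnormE n l p q r (fun k x => ENNReal.ofReal (t k x)) φ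

/-- Membership in `B̃^l_{p,q,r}(ℝⁿ, {t_k})`. -/
def MemTildeB (n l : ℕ) (p q r : ℝ≥0∞) (t : ℕ → Rn n → ℝ) (φ : Rn n → ℝ) : Prop :=
  MemLrLoc n r φ ∧ tildeBnorm n l p q r t φ < ∞

/-- Quasinorm of `B̄^l_{p,q,r}(ℝⁿ, {t_k})`. -/
def barBnorm (n l : ℕ) (p q r : ℝ≥0∞) (t : ℕ → Rn n → ℝ) (φ : Rn n → ℝ) : ℝ≥0∞ :=
  lqNorm q (fun k : ℕ =>
    lpNormE p volume (fun x =>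
      ENNReal.ofReal (t (k + 1) x) * barDelta n l r ((2 : ℝ) ^ (-((k : ℤ) + 1))) φ x)) +
  lpNormE p volume (fun x => ENNReal.ofReal (t 0 x) * eLpNorm φ r (volume.restrict (openCube x 1)))

/-- Membership in `B̄^l_{p,q,r}(ℝⁿ, {t_k})`. -/
def MemBarB (n l : ℕ) (p q r : ℝ≥0∞) (t : ℕ → Rn n → ℝ) (φ : Rn n → ℝ) : Prop :=
  MemLrLoc n r φ ∧ barBnorm n l p q r t φ < ∞

/-- The class `A^{loc}_∞`. -/
def MemAlocInfty (n : ℕ) (w : Rn n → ℝ) : Prop :=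
  ∃ α : ℝ, α ∈ Set.Ioo (0 : ℝ) 1 ∧ ∃ M : ℝ≥0∞, M < ∞ ∧
    ∀ (c : Rn n) (s : ℝ), 0 < s → s ≤ 1 →
      ∀ F : Set (Rn n), F ⊆ cubeAt c s → MeasurableSet F →
        ENNReal.ofReal α * volume (cubeAt c s) ≤ volume F →
        (∫⁻ x in cubeAt c s, ENNReal.ofReal (w x)) ≤ M * ∫⁻ x in F, ENNReal.ofReal (w x)

/-- The class `A^{loc}_1`. -/
def MemAloc1 (n : ℕ) (w : Rn n → ℝ) : Prop :=
  ∃ C : ℝ≥0∞, C < ∞ ∧ ∀ (c : Rn n) (s : ℝ), 0 < s → s ≤ 1 →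
    ∀ᵐ x ∂volume.restrict (cubeAt c s),
      (∫⁻ y in cubeAt c s, ENNReal.ofReal (w y)) ≤ C * volume (cubeAt c s) * ENNReal.ofReal (w x)

/-- The class `A^{loc}_{p₀}` for `p₀ > 1`. -/
def MemAlocGt (n : ℕ) (p₀ : ℝ) (w : Rn n → ℝ) : Prop :=
  ∃ C : ℝ≥0∞, C < ∞ ∧ ∀ (c : Rn n) (s : ℝ), 0 < s → s ≤ 1 →
    ((volume (cubeAt c s))⁻¹ * ∫⁻ y in cubeAt c s, ENNReal.ofReal (w y)) *
      ((volume (cubeAt c s))⁻¹ *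
        ∫⁻ y in cubeAt c s, ENNReal.ofReal (w y) ^ (-(1 : ℝ) / (p₀ - 1))) ^ (p₀ - 1) ≤ C

/-- The class `A^{loc}_{p₀}` for `p₀ ∈ [1,∞)`. -/
def MemAlocP (n : ℕ) (p₀ : ℝ) (w : Rn n → ℝ) : Prop :=
  if p₀ = 1 then MemAloc1 n w else MemAlocGt n p₀ w

/-- The class `{}^{loc}Y^{α₃}_{α₁,α₂}` of weight sequences of variable smoothness. -/
def MemLocY (n : ℕ) (α₁ α₂ α₃ : ℝ) (s : ℕ → Rn n → ℝ) : Prop :=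
  (∀ k, IsWeight (s k)) ∧
  (∃ C : ℝ, 0 < C ∧ ∀ j k : ℕ, j ≤ k → ∀ x : Rn n,
    C⁻¹ * (2 : ℝ) ^ (α₁ * ((k : ℝ) - (j : ℝ))) ≤ s k x / s j x ∧
      s k x / s j x ≤ C * (2 : ℝ) ^ (α₂ * ((k : ℝ) - (j : ℝ)))) ∧
  (∀ k : ℕ, ∀ x y : Rn n, euclNorm (x - y) ≤ (2 : ℝ) ^ (-(k : ℤ)) →
    s k x ≤ (2 : ℝ) ^ α₃ * s k y)

/-- The set `Ξ^{d,n}_{k,m} = Q^n_{k,m} × (2^{-k}B^d ∖ 2^{-k-1}B^d) ⊂ ℝ^{n+d}`. -/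
def Xi (n d k : ℕ) (m : Fin n → ℤ) : Set (Rn (n + d)) :=
  {z | (fun i => z (Fin.castAdd d i)) ∈ dyadicCube n k m ∧
       euclNorm (fun i : Fin d => z (Fin.natAdd n i)) < (2 : ℝ) ^ (-(k : ℤ)) ∧
       (2 : ℝ) ^ (-(k : ℤ) - 1) ≤ euclNorm (fun i : Fin d => z (Fin.natAdd n i))}

/-- The multiple sequence `γ̂_{k,m} = ‖γ‖_{L_p(Ξ^{d,n}_{k,m})}` generated by a weight `γ`. -/
def gammaHat (n d : ℕ) (p : ℝ≥0∞) (γ : Rn (n + d) → ℝ) (k : ℕ) (m : Fin n → ℤ) : ℝ≥0∞ :=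
  eLpNorm γ p (volume.restrict (Xi n d k m))

def delta1Good (n d : ℕ) (p : ℝ≥0∞) (γ : Rn (n + d) → ℝ) (δ : ℝ) : Prop :=
  ∃ C : ℝ≥0∞, C < ∞ ∧ ∀ k j : ℕ, k ≤ j → ∀ m : Fin n → ℤ,
    (∑' m' : {m' : Fin n → ℤ // dyadicCube n j m' ⊆ dyadicCube n k m},
        gammaHat n d p γ j m'.1 ^ p.toReal) ≤
      C * (2 : ℝ≥0∞) ^ ((((k : ℝ) - (j : ℝ)) * (d : ℝ)) * δ) * gammaHat n d p γ k m ^ p.toReal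

/-- `δ₁(γ,n,d)`. -/
def delta1 (n d : ℕ) (p : ℝ≥0∞) (γ : Rn (n + d) → ℝ) : ℝ :=
  sSup {δ : ℝ | 0 < δ ∧ delta1Good n d p γ δ}

def delta2Good (n d : ℕ) (p : ℝ≥0∞) (γ : Rn (n + d) → ℝ) (δ : ℝ) : Prop :=
  ∃ C : ℝ≥0∞, C < ∞ ∧ ∀ k j : ℕ, k ≤ j → ∀ m : Fin n → ℤ,
    ∀ G : Set (Fin n → ℤ), (∀ m' ∈ G, dyadicCube n j m' ⊆ dyadicCube n k m) →
      (∑' m' : G, gammaHat n d p γ j m'.1 ^ p.toReal) ≤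
        C * (volume (⋃ m' ∈ G, dyadicCube n j m') / volume (dyadicCube n k m)) ^ δ *
          ∑' m' : {m' : Fin n → ℤ // dyadicCube n j m' ⊆ dyadicCube n k m},
            gammaHat n d p γ j m'.1 ^ p.toReal

/-- `δ₂(γ,n,d)`. -/
def delta2 (n d : ℕ) (p : ℝ≥0∞) (γ : Rn (n + d) → ℝ) : ℝ :=
  sSup {δ : ℝ | 0 < δ ∧ delta2Good n d p γ δ}

/-- The cardinal B-spline of degree `deg` with knots `0, 1, …, deg + 1`. -/
def cardB : ℕ → ℝ → ℝ
  | 0, x => if 0 ≤ x ∧ x < 1 then 1 else 0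
  | (d + 1), x => (x / (d + 1)) * cardB d x + (((d : ℝ) + 2 - x) / (d + 1)) * cardB d (x - 1)

/-- The tensor-product B-spline `N^{deg}_{k,m}` on `ℝⁿ`. -/
def Bspl (n deg k : ℕ) (m : Fin n → ℤ) (x : Rn n) : ℝ :=
  ∏ i, cardB deg (2 ^ k * x i - (m i : ℝ))

/-- The spline `Σ_m β_m N^{deg}_{k,m}`. -/
def splineSum (n deg k : ℕ) (β : (Fin n → ℤ) → ℝ) (x : Rn n) : ℝ :=
  ∑' m, β m * Bspl n deg k m x

/-- A dyadic spline of degree `deg` (an element of `Σ^{deg} = ⋃_k Σ^{deg}_k`). -/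
def IsSplineFn (n deg : ℕ) (S : Rn n → ℝ) : Prop :=
  ∃ (k : ℕ) (β : (Fin n → ℤ) → ℝ), S = splineSum n deg k β

/-- The weighted best spline approximation `s_k(φ)` by splines of degree `deg`. -/
def sApprox (n deg : ℕ) (p r : ℝ≥0∞) (T : ℕ → (Fin n → ℤ) → ℝ≥0∞) (φ : Rn n → ℝ) (k : ℕ) :
    ℝ≥0∞ :=
  ⨅ β : (Fin n → ℤ) → ℝ,
    lqNorm p (fun m => T k m *
      eLpNorm (fun x => φ x - splineSum n deg k β x) r (volume.restrict (dyadicCube n k m)))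

/-- `s_j(φ)` for `j ∈ {-1, 0, 1, 2, …}`, including the term `s_{-1}`. -/
def sApproxZ (n deg : ℕ) (p r : ℝ≥0∞) (T : ℕ → (Fin n → ℤ) → ℝ≥0∞) (φ : Rn n → ℝ) (j : ℤ) :
    ℝ≥0∞ :=
  if j < 0 then
    lqNorm p (fun m => T 0 m * eLpNorm φ r (volume.restrict (dyadicCube n 0 m)))
  else sApprox n deg p r T φ j.toNat

/-- Local best polynomial approximation `E_l(φ,Q)_r` by polynomials of total degree `< l`. -/
def bestApproxE (n l : ℕ) (r : ℝ≥0∞) (φ : Rn n → ℝ) (Q : Set (Rn n)) : ℝ≥0∞ :=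
  ⨅ P : {P : MvPolynomial (Fin n) ℝ // P.totalDegree < l},
    eLpNorm (fun x => φ x - MvPolynomial.eval x P.1) r (volume.restrict Q)

/-- The modulus of continuity `ω_l(φ,Q)_r`. -/
def modulusE (n l : ℕ) (r : ℝ≥0∞) (φ : Rn n → ℝ) (Q : Set (Rn n)) : ℝ≥0∞ :=
  ⨆ h : Rn n, eLpNorm (difflOn l Q h φ) r (volume : Measure (Rn n))

def partialDeriv {N : ℕ} (i : Fin N) (ψ : Rn N → ℝ) : Rn N → ℝ :=
  fun x => fderiv ℝ ψ x (Pi.single i 1)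

def iterPD {N : ℕ} : List (Fin N) → (Rn N → ℝ) → Rn N → ℝ
  | [], ψ => ψ
  | i :: L, ψ => partialDeriv i (iterPD L ψ)

def multiIdxList {N : ℕ} (α : Fin N → ℕ) : List (Fin N) :=
  (List.finRange N).foldr (fun i L => List.replicate (α i) i ++ L) []

/-- Iterated partial derivative `D^α`. -/
def multiDeriv {N : ℕ} (α : Fin N → ℕ) (ψ : Rn N → ℝ) : Rn N → ℝ :=
  iterPD (multiIdxList α) ψ

/-- `g` is the weak (Sobolev) derivative `D^α f`. -/
def IsWeakDeriv {N : ℕ} (α : Fin N → ℕ) (f g : Rn N → ℝ) : Prop :=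
  ∀ ψ : Rn N → ℝ, ContDiff ℝ (⊤ : ℕ∞) ψ → HasCompactSupport ψ →
    ∫ x, f x * multiDeriv α ψ x = (-1 : ℝ) ^ (∑ i, α i) * ∫ x, g x * ψ x

/-- The weighted Sobolev norm `Σ_{|α| ≤ l} ‖γ · D^α f‖_{L_p}` computed from a system `D` of
weak derivatives. -/
def sobNorm (N : ℕ) (p : ℝ≥0∞) (l : ℕ) (γ : Rn N → ℝ) (D : (Fin N → ℕ) → Rn N → ℝ) : ℝ≥0∞ :=
  ∑' α : Fin N → ℕ,
    if (∑ i, α i) ≤ l then eLpNorm (fun x => γ x * D α x) p volume else 0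

/-- Membership in the weighted Sobolev space `W^l_p(ℝ^N, γ)`, witnessed by the system `D`
of weak derivatives of `f`. -/
def MemW (N : ℕ) (p : ℝ≥0∞) (l : ℕ) (γ : Rn N → ℝ) (f : Rn N → ℝ)
    (D : (Fin N → ℕ) → Rn N → ℝ) : Prop :=
  MeasureTheory.LocallyIntegrable f volume ∧ D 0 = f ∧
    (∀ α : Fin N → ℕ, (∑ i, α i) ≤ l →
      MeasureTheory.LocallyIntegrable (D α) volume ∧ IsWeakDeriv α f (D α)) ∧
    sobNorm N p l γ D < ∞

/-- `φ` is the trace of `f` on the plane `y = 0`. -/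
def IsTraceSob {n d : ℕ} (f : Rn (n + d) → ℝ) (φ : Rn n → ℝ) : Prop :=
  ∃ f' : Rn (n + d) → ℝ, f' =ᵐ[volume] f ∧
    ∀ (c : Rn n) (s : ℝ), 0 < s →
      Filter.Tendsto (fun y : Rn d => ∫ x in cubeAt c s, |f' (Fin.append x y) - φ x|)
        (nhds 0) (nhds 0)

/-- The weight sequence `γ_k(x) = 2^{k(l+n/p)} Σ_m χ_{Q̃^n_{k,m}}(x) γ̂_{k,m}`. -/
def gammaSeq (n d : ℕ) (p : ℝ≥0∞) (l : ℕ) (γ : Rn (n + d) → ℝ) (k : ℕ) (x : Rn n) : ℝ≥0∞ :=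
  (2 : ℝ≥0∞) ^ ((k : ℝ) * ((l : ℝ) + (n : ℝ) / p.toReal)) *
    ∑' m : Fin n → ℤ, (dyadicCubeHalf n k m).indicator (fun _ => gammaHat n d p γ k m) x

/-- Conjugate exponent in `ℝ≥0∞`. -/
def conjE (e : ℝ≥0∞) : ℝ≥0∞ := (1 - e⁻¹)⁻¹

/-- The exponent `p_θ`. -/
def pTheta (p θ : ℝ≥0∞) : ℝ≥0∞ := if θ = ∞ ∧ p = ∞ then 1 else p / θ

open Topology

lemma lpNormE_eq {α : Type*} [MeasurableSpace α] (p : ℝ≥0∞) (hp : 0 < p) (μ : Measure α)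
    (f : α → ℝ≥0∞) : lpNormE p μ f = eLpNorm f p μ := by
  unfold lpNormE
  split_ifs with h
  · subst h; simp [eLpNorm_exponent_top, eLpNormEssSup]
  · rw [eLpNorm_eq_lintegral_rpow_enorm_toReal hp.ne' h]; simp

lemma lqNorm_eq (q : ℝ≥0∞) (c : ℕ → ℝ≥0∞) :
    lqNorm q c = lpNormE q Measure.count c := by
  unfold lqNorm lpNormE
  split_ifs with h
  · rw [essSup_count]
  · rw [lintegral_count]

lemma rpow_liminf_le (u : ℕ → ℝ≥0∞) (y : ℝ) (hy : 0 < y) :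
    (liminf u atTop) ^ y = liminf (fun k => u k ^ y) atTop :=
  (ENNReal.orderIsoRpow y hy).liminf_apply

lemma const_mul_liminf_le (u : ℕ → ℝ≥0∞) (c : ℝ≥0∞) :
    c * (liminf u atTop) ≤ liminf (fun k => c * u k) atTop := by
  have := ENNReal.le_liminf_mul (f := atTop) (u := fun _ : ℕ => c) (v := u)
  rw [liminf_const] at this
  exact this

lemma lpNormE_fatou {α : Type*} [MeasurableSpace α] (p : ℝ≥0∞) (hp : 0 < p) (μ : Measure α)
    (f : ℕ → α → ℝ≥0∞) (hf : ∀ k, Measurable (f k)) (g : α → ℝ≥0∞)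
    (hg : ∀ x, g x ≤ liminf (fun k => f k x) atTop) :
    lpNormE p μ g ≤ liminf (fun k => lpNormE p μ (f k)) atTop := by
  unfold lpNormE
  split_ifs with h
  · exact (essSup_mono_ae (Eventually.of_forall hg)).trans (ENNReal.essSup_liminf_le f)
  · have hp' := ENNReal.toReal_pos hp.ne' h
    rw [← rpow_liminf_le _ _ (by positivity)]
    gcongr
    refine le_trans ?_ (lintegral_liminf_le fun k => (hf k).pow_const _)
    gcongr with x
    rw [← rpow_liminf_le _ _ hp']
    gcongr
    exact hg x

lemma lqNorm_fatou (p : ℝ≥0∞) (hp : 0 < p) 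
    (f : ℕ → ℕ → ℝ≥0∞) (g : ℕ → ℝ≥0∞)
    (hg : ∀ x, g x ≤ liminf (fun k => f k x) atTop) :
    lqNorm p g ≤ liminf (fun k => lqNorm p (f k)) atTop := by
  simp only [lqNorm_eq]
  exact lpNormE_fatou p hp _ f (fun _ => measurable_from_top) g hg

lemma lpNormE_fin {α : Type*} [MeasurableSpace α] (p : ℝ≥0∞) (hp : 0 < p) (μ : Measure α)
    (C : ℝ≥0∞) (hC : C ≠ ∞) :
    ∃ D : ℝ≥0∞, D ≠ ∞ ∧ ∀ (f g h : α → ℝ≥0∞), Measurable f → Measurable g → 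
      (∀ x, h x ≤ C * (f x + g x)) → lpNormE p μ h ≤ D * (lpNormE p μ f + lpNormE p μ g) := by
  refine ⟨C * LpAddConst p, ENNReal.mul_ne_top hC (LpAddConst_lt_top p).ne, 
    fun f g h hf hg hh => ?_⟩
  simp only [lpNormE_eq p hp]
  lift C to NNReal using hC
  have := eLpNorm_le_nnreal_smul_eLpNorm_of_ae_le_mul' (μ := μ) (f := h) (g := f + g) (c := C)
    (Eventually.of_forall fun x => by simpa using hh x) p
  refine this.trans ?_
  rw [mul_assoc, ENNReal.smul_def, smul_eq_mul]
  gcongr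
  exact eLpNorm_add_le' hf.aestronglyMeasurable hg.aestronglyMeasurable p

lemma lpNormE_mul_const {α : Type*} [MeasurableSpace α] (p : ℝ≥0∞) (hp : 0 < p) (μ : Measure α)
    (f : α → ℝ≥0∞) (hf : Measurable f) (c : ℝ≥0∞) :
    lpNormE p μ (fun x => f x * c) = lpNormE p μ f * c := by
  unfold lpNormE
  split_ifs with h
  · simp_rw [mul_comm _ c]; exact ENNReal.essSup_const_mul
  · have hp' := ENNReal.toReal_pos hp.ne' h
    simp_rw [ENNReal.mul_rpow_of_nonneg _ _ hp'.le]
    rw [lintegral_mul_const _ (hf.pow_const _), ENNReal.mul_rpow_of_nonneg _ _ (by positivity),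
      ← ENNReal.rpow_mul, mul_one_div_cancel hp'.ne', ENNReal.rpow_one]

lemma lpNormE_mono {α : Type*} [MeasurableSpace α] (p : ℝ≥0∞) (hp : 0 < p) (μ : Measure α)
    (f g : α → ℝ≥0∞) (hfg : f ≤ᵐ[μ] g) : lpNormE p μ f ≤ lpNormE p μ g := by
  rw [lpNormE_eq p hp, lpNormE_eq p hp]
  exact eLpNorm_mono_enorm_ae (hfg.mono fun x hx => by simpa using hx)

lemma lpNormE_restrict {α : Type*} [MeasurableSpace α] (p : ℝ≥0∞) (hp : 0 < p) (μ : Measure α)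
    (f : α → ℝ≥0∞) (s : Set α) : lpNormE p (μ.restrict s) f ≤ lpNormE p μ f := by
  rw [lpNormE_eq p hp, lpNormE_eq p hp]
  exact eLpNorm_mono_measure _ Measure.restrict_le_self

lemma lpNormE_pos {α : Type*} [MeasurableSpace α] (p : ℝ≥0∞) (hp : 0 < p) (μ : Measure α)
    (hμ : μ ≠ 0) (f : α → ℝ≥0∞) (hf : Measurable f) (h0 : ∀ x, 0 < f x) : 0 < lpNormE p μ f := by
  rw [lpNormE_eq p hp, pos_iff_ne_zero]
  intro h
  rw [eLpNorm_eq_zero_iff hf.aestronglyMeasurable hp.ne'] at h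
  have : ∀ᵐ x ∂μ, False := h.mono fun x hx => (h0 x).ne' hx
  exact hμ (by simpa using this)

lemma measurable_eLpNorm_section {X β : Type*} [MeasurableSpace X] [MeasurableSpace β]
    (μ : Measure β) [SFinite μ] (r : ℝ≥0∞) (hr : 0 < r) (f : β → ℝ) (hf : Measurable f)
    (S : X → Set β) (hS : MeasurableSet {z : X × β | z.2 ∈ S z.1}) :
    Measurable (fun x => eLpNorm f r (μ.restrict (S x))) := by
  have hSx : ∀ x, MeasurableSet (S x) := fun x => measurable_prodMk_left (x := x) hS
  by_cases h : r = ∞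
  · subst h
    refine measurable_of_Ioi fun a => ?_
    have hA : MeasurableSet {z : X × β | z.2 ∈ S z.1 ∧ a < ‖f z.2‖ₑ} :=
      hS.inter (measurableSet_lt measurable_const (hf.comp measurable_snd).enorm)
    have := measurable_measure_prodMk_left (ν := μ) hA
    have h2 : (fun x => eLpNorm f ∞ (μ.restrict (S x))) ⁻¹' Set.Ioi a =
        {x | 0 < μ (Prod.mk x ⁻¹' {z : X × β | z.2 ∈ S z.1 ∧ a < ‖f z.2‖ₑ})} := by
      ext x
      simp only [Set.mem_preimage, Set.mem_Ioi, Set.mem_ofPred_eq]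
      rw [← not_le, pos_iff_ne_zero, not_iff_comm, not_ne_iff, eLpNorm_exponent_top]
      have e1 : eLpNormEssSup f (μ.restrict (S x)) ≤ a ↔ ∀ᵐ y ∂(μ.restrict (S x)), ‖f y‖ₑ ≤ a :=
        ⟨fun h => (enorm_ae_le_eLpNormEssSup f _).mono fun y hy => hy.trans h,
          fun h => essSup_le_of_ae_le a h⟩
      rw [e1, ae_restrict_iff' (hSx x), ae_iff]
      have : {y | ¬(y ∈ S x → ‖f y‖ₑ ≤ a)} = 
        Prod.mk x ⁻¹' {z : X × β | z.2 ∈ S z.1 ∧ a < ‖f z.2‖ₑ} := by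
        ext y; simp
      rw [this]
    rw [h2]
    exact measurableSet_lt measurable_const this
  · simp_rw [eLpNorm_eq_lintegral_rpow_enorm_toReal hr.ne' h, ← lintegral_indicator (hSx _)]
    refine Measurable.pow_const ?_ _
    have : Measurable (fun z : X × β => {z : X × β | z.2 ∈ S z.1}.indicator
      (fun z => ‖f z.2‖ₑ ^ r.toReal) z) :=
      (((hf.comp measurable_snd).enorm).pow_const _).indicator hS
    exact this.lintegral_prod_right'

lemma openCube_eq_ball {n : ℕ} (x : Rn n) (s : ℝ) (hs : 0 < s) : openCube x s = Metric.ball x s := by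
  ext y
  simp [openCube, dist_pi_lt_iff hs, Real.dist_eq]

lemma measurableSet_cubes {n : ℕ} (s : ℝ) (hs : 0 < s) :
    MeasurableSet {z : Rn n × Rn n | z.2 ∈ openCube z.1 s} := by
  simp only [openCube_eq_ball _ s hs, Metric.mem_ball]
  exact measurableSet_lt (measurable_snd.dist measurable_fst) measurable_const

lemma measurable_shift {n : ℕ} (j : ℝ) :
    Measurable (fun z : Rn n × Rn n => z.2 + j • z.1) :=
  measurable_snd.add (measurable_fst.const_smul j)

lemma measurable_diffl {n : ℕ} (l : ℕ) (g : Rn n → ℝ) (hg : Measurable g) :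
    Measurable (fun z : Rn n × Rn n => diffl l z.1 g z.2) := by
  unfold diffl
  exact Finset.measurable_fun_sum _ fun j _ => (hg.comp (measurable_shift (j : ℝ))).const_mul _

lemma diffl_sub {n : ℕ} (l : ℕ) (h : Rn n) (f g : Rn n → ℝ) (x : Rn n) :
    diffl l h (fun y => f y - g y) x = diffl l h f x - diffl l h g x := by
  simp only [diffl, mul_sub, Finset.sum_sub_distrib]

lemma qmp_shift {n : ℕ} (j : ℝ) :
    Measure.QuasiMeasurePreserving (fun z : Rn n × Rn n => z.2 + j • z.1)
      ((volume : Measure (Rn n)).prod volume) volume := by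
  have h1 : MeasurePreserving (fun z : Rn n × Rn n => (z.1, z.2 + j • z.1))
      ((volume : Measure (Rn n)).prod volume) (volume.prod volume) := by
    refine (MeasurePreserving.id volume).skew_product (g := fun h x => x + j • h)
      (measurable_shift j) (Eventually.of_forall fun h => ?_)
    exact (measurePreserving_add_right volume (j • h)).map_eq
  exact Measure.quasiMeasurePreserving_snd.comp h1.quasiMeasurePreserving

lemma diffl_tendsto_ae {n : ℕ} (l : ℕ) (f : ℕ → Rn n → ℝ) (g : Rn n → ℝ)
    (h : ∀ᵐ x, Tendsto (fun k => f k x) atTop (𝓝 (g x))) :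
    ∀ᵐ z ∂((volume : Measure (Rn n)).prod volume),
      Tendsto (fun k => diffl l z.1 (f k) z.2) atTop (𝓝 (diffl l z.1 g z.2)) := by
  have : ∀ᵐ z ∂((volume : Measure (Rn n)).prod volume), ∀ j : ℕ,
      Tendsto (fun k => f k (z.2 + (j : ℝ) • z.1)) atTop (𝓝 (g (z.2 + (j : ℝ) • z.1))) :=
    ae_all_iff.2 fun j => (qmp_shift (j : ℝ)).ae h
  filter_upwards [this] with z hz
  unfold diffl
  exact tendsto_finsetSum _ fun j _ => (hz j).const_mul _

lemma measurable_deltaE {n : ℕ} (l : ℕ) (r : ℝ≥0∞) (hr : 0 < r) (s s' : ℝ) (hs : 0 < s)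
    (hs' : 0 < s') (g : Rn n → ℝ) (hg : Measurable g) :
    Measurable (fun x => deltaE n l r s (openCube x s') g) := by
  unfold deltaE
  refine Measurable.const_mul ?_ _
  simp only [Measure.prod_restrict]
  refine measurable_eLpNorm_section _ r hr _ (measurable_diffl l g hg) _ ?_
  have : {z : Rn n × Rn n × Rn n | z.2 ∈ openCube (0 : Rn n) s ×ˢ openCube z.1 s'} =
    {z : Rn n × Rn n × Rn n | z.2.1 ∈ Metric.ball (0 : Rn n) s} ∩
      {z | (z.1, z.2.2) ∈ {w : Rn n × Rn n | w.2 ∈ openCube w.1 s'}} := by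
    ext z
    rw [← openCube_eq_ball _ _ hs]
    rfl
  rw [this]
  refine MeasurableSet.inter ?_ ?_
  · exact (measurable_fst.comp measurable_snd) measurableSet_ball
  · exact (measurable_fst.prodMk (measurable_snd.comp measurable_snd)) (measurableSet_cubes s' hs')

lemma deltaE_fatou {n : ℕ} (l : ℕ) (r : ℝ≥0∞) (s : ℝ) (Q : Set (Rn n)) (f : ℕ → Rn n → ℝ)
    (hf : ∀ k, Measurable (f k)) (g : Rn n → ℝ)
    (h : ∀ᵐ x, Tendsto (fun k => f k x) atTop (𝓝 (g x))) :
    deltaE n l r s Q g ≤ liminf (fun k => deltaE n l r s Q (f k)) atTop := by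
  unfold deltaE
  refine le_trans ?_ (const_mul_liminf_le _ _)
  gcongr
  refine Lp.eLpNorm_lim_le_liminf_eLpNorm
    (fun k => (measurable_diffl l (f k) (hf k)).aestronglyMeasurable) _ ?_
  rw [Measure.prod_restrict]
  exact ae_restrict_of_ae (diffl_tendsto_ae l f g h)

lemma eLpNorm_sub_le_const {β : Type*} [MeasurableSpace β] (μ : Measure β) (r : ℝ≥0∞)
    (f g : β → ℝ) (hf : Measurable f) (hg : Measurable g) :
    eLpNorm (fun x => f x - g x) r μ ≤ LpAddConst r * (eLpNorm f r μ + eLpNorm g r μ) := 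
  eLpNorm_sub_le' hf.aestronglyMeasurable hg.aestronglyMeasurable r

lemma deltaE_sub {n : ℕ} (l : ℕ) (r : ℝ≥0∞) (s : ℝ) (Q : Set (Rn n)) (f g : Rn n → ℝ)
    (hf : Measurable f) (hg : Measurable g) :
    deltaE n l r s Q (fun x => f x - g x) ≤
      LpAddConst r * (deltaE n l r s Q f + deltaE n l r s Q g) := by
  unfold deltaE
  simp only [diffl_sub]
  rw [← mul_add, mul_left_comm]
  gcongr
  exact eLpNorm_sub_le_const _ r _ _ (measurable_diffl l f hf) (measurable_diffl l g hg)

section main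
variable {n l : ℕ} {p q r : ℝ≥0∞} {t : ℕ → Rn n → ℝ}

lemma measurable_term (hr : 0 < r) (ht : ∀ k, Measurable (t k)) (k : ℕ)
    (f : Rn n → ℝ) (hf : Measurable f) :
    Measurable (fun x => ENNReal.ofReal (t (k + 1) x) *
        deltaE n l r ((2 : ℝ) ^ (1 - ((k : ℤ) + 1)))
          (openCube x ((2 : ℝ) ^ (-((k : ℤ) + 1)))) f) :=
  (ht _).ennreal_ofReal.mul (measurable_deltaE l r hr _ _ (by positivity) (by positivity) f hf)

lemma measurable_term0 (hr : 0 < r) (ht : ∀ k, Measurable (t k))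
    (f : Rn n → ℝ) (hf : Measurable f) :
    Measurable (fun x => ENNReal.ofReal (t 0 x) * 
      eLpNorm f r (volume.restrict (openCube x 1))) :=
  (ht _).ennreal_ofReal.mul (measurable_eLpNorm_section volume r hr f hf _
    (measurableSet_cubes 1 one_pos))

lemma tildeBnorm_fatou (hp : 0 < p) (hq : 0 < q) (hr : 0 < r) (ht : ∀ k, Measurable (t k))
    (f : ℕ → Rn n → ℝ) (hf : ∀ k, Measurable (f k)) (g : Rn n → ℝ)
    (h : ∀ᵐ x, Tendsto (fun k => f k x) atTop (𝓝 (g x))) :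
    tildeBnorm n l p q r t g ≤ 2 * liminf (fun k => tildeBnorm n l p q r t (f k)) atTop := by
  rw [two_mul]
  unfold tildeBnorm tildeBnormE
  refine add_le_add ?_ ?_
  · refine (lqNorm_fatou q hq (fun k i => lpNormE p volume (fun x =>
      ENNReal.ofReal (t (i + 1) x) * deltaE n l r ((2 : ℝ) ^ (1 - ((i : ℤ) + 1)))
        (openCube x ((2 : ℝ) ^ (-((i : ℤ) + 1)))) (f k))) _ fun i => ?_).trans
      (liminf_le_liminf (Eventually.of_forall fun k => le_self_add))
    refine lpNormE_fatou p hp _ _ (fun k => measurable_term hr ht i (f k) (hf k)) _ fun x => ?_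
    refine le_trans ?_ (const_mul_liminf_le _ _)
    gcongr
    exact deltaE_fatou l r _ _ f hf g h
  · refine le_trans ?_ (liminf_le_liminf (Eventually.of_forall fun k => le_add_self))
    refine lpNormE_fatou p hp _ _ (fun k => measurable_term0 hr ht (f k) (hf k)) _ fun x => ?_
    refine le_trans ?_ (const_mul_liminf_le _ _)
    gcongr
    exact Lp.eLpNorm_lim_le_liminf_eLpNorm (fun k => (hf k).aestronglyMeasurable) _
      (ae_restrict_of_ae h)

lemma tildeBnorm_sub_lt_top (hp : 0 < p) (hq : 0 < q) (hr : 0 < r) (ht : ∀ k, Measurable (t k))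
    (f g : Rn n → ℝ) (hf : Measurable f) (hg : Measurable g)
    (hf' : tildeBnorm n l p q r t f < ∞) (hg' : tildeBnorm n l p q r t g < ∞) :
    tildeBnorm n l p q r t (fun x => f x - g x) < ∞ := by
  obtain ⟨D, hD, hD'⟩ := lpNormE_fin (α := Rn n) p hp volume (LpAddConst r) (LpAddConst_lt_top r).ne
  obtain ⟨E, hE, hE'⟩ := lpNormE_fin (α := ℕ) q hq Measure.count D hD
  unfold tildeBnorm tildeBnormE at *
  rw [ENNReal.add_lt_top] at *
  constructor
  · rw [lqNorm_eq] at *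
    refine (hE' _ _ _ measurable_from_top measurable_from_top fun k => 
      hD' _ _ _ (measurable_term hr ht k f hf) (measurable_term hr ht k g hg) fun x => ?_).trans_lt
      (ENNReal.mul_lt_top hE.lt_top (ENNReal.add_lt_top.2 ⟨hf'.1, hg'.1⟩))
    rw [← mul_add, mul_left_comm]
    gcongr
    exact deltaE_sub l r _ _ f g hf hg
  · refine (hD' _ _ _ (measurable_term0 hr ht f hf) (measurable_term0 hr ht g hg) 
      fun x => ?_).trans_lt
      (ENNReal.mul_lt_top hD.lt_top (ENNReal.add_lt_top.2 ⟨hf'.2, hg'.2⟩))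
    rw [← mul_add, mul_left_comm]
    gcongr
    exact eLpNorm_sub_le_const _ r f g hf hg

/-- Local control. -/
lemma local_control (hp : 0 < p) (ht : ∀ k, Measurable (t k)) (htp : ∀ k x, 0 < t k x)
    (y : Rn n) : ∃ L : ℝ≥0∞, 0 < L ∧ L ≠ ∞ ∧ ∀ f : Rn n → ℝ,
      L * eLpNorm f r (volume.restrict (Metric.ball y (1/2))) ≤ tildeBnorm n l p q r t f := by
  have hpos : 0 < lpNormE p (volume.restrict (Metric.ball y (1/2)))
      (fun x => ENNReal.ofReal (t 0 x)) := by
    refine lpNormE_pos p hp _ ?_ _ (ht 0).ennreal_ofReal fun x => by simpa using htp 0 x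
    rw [Ne, Measure.restrict_eq_zero]
    exact (Metric.measure_ball_pos volume y (by norm_num)).ne'
  refine ⟨min 1 (lpNormE p (volume.restrict (Metric.ball y (1/2)))
      (fun x => ENNReal.ofReal (t 0 x))), lt_min one_pos hpos, 
      (min_le_left _ _).trans_lt one_lt_top |>.ne, fun f => ?_⟩
  refine (mul_le_mul_left (min_le_right _ _) _).trans ?_
  rw [← lpNormE_mul_const p hp _ _ (ht 0).ennreal_ofReal]
  unfold tildeBnorm tildeBnormE
  refine le_trans ?_ le_add_self
  refine le_trans ?_ (lpNormE_restrict p hp _ _ (Metric.ball y (1/2)))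
  refine lpNormE_mono p hp _ _ _ ?_
  filter_upwards [ae_restrict_mem measurableSet_ball] with x hx
  gcongr
  rw [openCube_eq_ball _ _ one_pos]
  refine Metric.ball_subset_ball' ?_
  rw [Metric.mem_ball'] at hx
  linarith

lemma meas_small {β : Type*} [MeasurableSpace β] (μ : Measure β) (hr : 0 < r) (η : ℝ≥0∞)
    (hη : 0 < η) (hη' : η ≠ ∞) : ∃ ρ : ℝ≥0∞, 0 < ρ ∧ ∀ f : β → ℝ, Measurable f →
      eLpNorm f r μ < ρ → μ {x | η ≤ ‖f x‖ₑ} ≤ η := by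
  by_cases h : r = ∞
  · subst h
    refine ⟨η, hη, fun f _ hf => ?_⟩
    rw [eLpNorm_exponent_top] at hf
    have : μ {x | η ≤ ‖f x‖ₑ} = 0 := by
      refine measure_mono_null ?_ (meas_eLpNormEssSup_lt (f := f) (μ := μ))
      intro x hx
      exact lt_of_lt_of_le hf hx
    simp [this]
  · have hr' := ENNReal.toReal_pos hr.ne' h
    have hne : η ^ r.toReal ≠ 0 := (ENNReal.rpow_pos hη hη').ne'
    have hnt : η ^ r.toReal ≠ ∞ := ENNReal.rpow_ne_top_of_nonneg hr'.le hη'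
    refine ⟨(η ^ r.toReal * η) ^ (1 / r.toReal), ENNReal.rpow_pos (by
      rw [pos_iff_ne_zero]; exact mul_ne_zero hne hη.ne') (ENNReal.mul_ne_top hnt hη'), 
      fun f hfm hf => ?_⟩
    have h1 := mul_meas_ge_le_pow_eLpNorm' μ hr.ne' h hfm.aestronglyMeasurable η
    have h2 : eLpNorm f r μ ^ r.toReal ≤ η ^ r.toReal * η := by
      calc _ ≤ ((η ^ r.toReal * η) ^ (1 / r.toReal)) ^ r.toReal := by gcongr
        _ = _ := by rw [← ENNReal.rpow_mul, one_div_mul_cancel hr'.ne', ENNReal.rpow_one]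
    exact (ENNReal.mul_le_mul_iff_right hne hnt).1 (h1.trans h2)

end main

lemma exists_limit {n : ℕ} (φ : ℕ → Rn n → ℝ) (hφ : ∀ k, Measurable (φ k))
    (h : ∀ (y : Rn n) (η : ℝ≥0∞), 0 < η → η ≠ ∞ → ∀ᶠ N in atTop, ∀ i ≥ N, ∀ j ≥ N,
      (volume.restrict (Metric.ball y (1/2))) {x | η ≤ ‖φ i x - φ j x‖ₑ} ≤ η) :
    ∃ (ψ : Rn n → ℝ) (u : ℕ → ℕ), Measurable ψ ∧ StrictMono u ∧
      ∀ᵐ x, Tendsto (fun k => φ (u k) x) atTop (𝓝 (ψ x)) := by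
  set d := TopologicalSpace.denseSeq (Rn n) with hd
  have hη : ∀ k : ℕ, (0 : ℝ≥0∞) < 2⁻¹ ^ k := fun k => ENNReal.pow_pos (by simp) k
  have hη' : ∀ k : ℕ, (2⁻¹ : ℝ≥0∞) ^ k ≠ ∞ := fun k => ENNReal.pow_ne_top (by simp)
  obtain ⟨u, hu, hu'⟩ := Filter.extraction_forall_of_eventually
    (P := fun k N => ∀ m ∈ Set.Iic k, ∀ i ≥ N, ∀ j ≥ N,
      (volume.restrict (Metric.ball (d m) (1/2))) {x | (2⁻¹ : ℝ≥0∞) ^ k ≤ ‖φ i x - φ j x‖ₑ}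
        ≤ 2⁻¹ ^ k)
    (fun k => (Set.finite_Iic k).eventually_all.2 fun m _ => h (d m) _ (hη k) (hη' k))
  have key : ∀ m, ∀ᵐ x ∂(volume.restrict (Metric.ball (d m) (1/2))),
      CauchySeq (fun k => φ (u k) x) := by
    intro m
    have hsum : ∑' k, (volume.restrict (Metric.ball (d m) (1/2)))
        {x | (2⁻¹ : ℝ≥0∞) ^ (k + m) ≤ ‖φ (u (k + m)) x - φ (u (k + m + 1)) x‖ₑ} ≠ ∞ := by
      refine ne_top_of_le_ne_top (b := ∑' k : ℕ, (2⁻¹ : ℝ≥0∞) ^ k) ?_ ?_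
      · rw [ENNReal.tsum_geometric]; simp
      · refine ENNReal.tsum_le_tsum fun k => ?_
        refine (hu' (k + m) m (by simp) _ le_rfl _ (hu.monotone (Nat.le_succ _))).trans ?_
        exact pow_le_pow_right_of_le_one' (by simp) (by omega)
    filter_upwards [ae_eventually_notMem hsum] with x hx
    obtain ⟨K, hK⟩ := eventually_atTop.1 hx
    have hc : CauchySeq (fun k => φ (u (k + (K + m))) x) := by
      refine cauchySeq_of_edist_le_geometric_two 1 (by simp) fun k => ?_
      have := hK (k + K) (by omega)
      simp only [not_le] at this
      rw [edist_eq_enorm_sub, one_div, ENNReal.inv_pow]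
      rw [show k + (K + m) = k + K + m by omega, show k + 1 + (K + m) = k + K + m + 1 by omega]
      exact this.le.trans (pow_le_pow_right_of_le_one' (by simp) (by omega))
    obtain ⟨a, ha⟩ := cauchySeq_tendsto_of_complete hc
    exact ((tendsto_add_atTop_iff_nat (K + m)).1 ha).cauchySeq
  have hall : ∀ᵐ x, CauchySeq (fun k => φ (u k) x) := by
    have hcov : (⋃ m, Metric.ball (d m) (1/2)) = (Set.univ : Set (Rn n)) := by
      refine Set.eq_univ_of_forall fun x => ?_
      obtain ⟨m, hm⟩ := (TopologicalSpace.denseRange_denseSeq (Rn n)).exists_dist_lt x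
        (show (0 : ℝ) < 1/2 by norm_num)
      exact Set.mem_iUnion.2 ⟨m, hm⟩
    have := (ae_restrict_iUnion_iff (μ := volume) (fun m => Metric.ball (d m) (1/2)) 
      (fun x => CauchySeq (fun k => φ (u k) x))).2 key
    rwa [hcov, Measure.restrict_univ] at this
  obtain ⟨ψ, hψ, hψ'⟩ := measurable_limit_of_tendsto_metrizable_ae (L := atTop)
    (fun k => (hφ (u k)).aemeasurable)
    (hall.mono fun x hx => cauchySeq_tendsto_of_complete hx)
  exact ⟨ψ, u, hψ, hu, hψ'⟩

lemma memLrLoc_of_balls {n : ℕ} (r : ℝ≥0∞) (f : Rn n → ℝ) (hf : Measurable f)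
    (h : ∀ y, eLpNorm f r (volume.restrict (Metric.ball y (1/2))) < ∞) : MemLrLoc n r f := by
  refine ⟨hf, fun K hK => ?_⟩
  obtain ⟨u, hu, hKu, hm⟩ := hK.induction_on
    (p := fun s => ∃ u, MeasurableSet u ∧ s ⊆ u ∧ MemLp f r (volume.restrict u))
    ⟨∅, MeasurableSet.empty, subset_rfl, by simp⟩
    (fun s s' hs ⟨u, hu, hsu, hm⟩ => ⟨u, hu, hs.trans hsu, hm⟩)
    (fun s s' ⟨u, hu, hsu, hm⟩ ⟨u', hu', hsu', hm'⟩ => ⟨u ∪ u', hu.union hu', 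
      Set.union_subset_union hsu hsu', by
        rw [← memLp_indicator_iff_restrict (hu.union hu')]
        rw [← memLp_indicator_iff_restrict hu] at hm
        have h2 : MemLp ((u' \ u).indicator f) r volume := by
          rw [memLp_indicator_iff_restrict (hu'.diff hu)]
          exact hm'.mono_measure (Measure.restrict_mono_set _ Set.sdiff_subset)
        have := hm.add h2
        have e := Set.indicator_union_of_disjoint (Set.disjoint_sdiff_right (s := u) (t := u')) f
        rw [Set.union_sdiff_self] at e
        rw [e]
        exact this⟩)
    (fun x _ => ⟨Metric.ball x (1/2), mem_nhdsWithin_of_mem_nhds (Metric.ball_mem_nhds x (by norm_num)),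
      Metric.ball x (1/2), measurableSet_ball, subset_rfl, hf.aestronglyMeasurable, h x⟩)
  exact (eLpNorm_mono_measure _ (Measure.restrict_mono_set _ hKu)).trans_lt hm.2

/-- **Theorem 2.4: the space `B̃^l_{p,q,r}(ℝⁿ,{t_k})` is complete.** -/
theorem tildeB_complete (n l : ℕ) (hn : 0 < n) (hl : 0 < l) (p q r : ℝ≥0∞)
    (hp : 0 < p) (hq : 0 < q) (hr : 0 < r) (α₁ α₂ α₃ : ℝ) (hα₃ : 0 ≤ α₃)
    (σ₁ σ₂ : ℝ≥0∞) (hσ₁ : 0 < σ₁) (hσ₂ : 0 < σ₂)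
    (t : ℕ → Rn n → ℝ) (ht : MemX n α₁ α₂ α₃ σ₁ σ₂ p t)
    (φ : ℕ → Rn n → ℝ) (hφ : ∀ j, MemTildeB n l p q r t (φ j))
    (hCauchy : ∀ ε : ℝ≥0∞, 0 < ε → ∃ N : ℕ, ∀ i ≥ N, ∀ j ≥ N,
      tildeBnorm n l p q r t (fun x => φ i x - φ j x) < ε) :
    ∃ ψ : Rn n → ℝ, MemTildeB n l p q r t ψ ∧
      ∀ ε : ℝ≥0∞, 0 < ε → ∃ N : ℕ, ∀ j ≥ N,
        tildeBnorm n l p q r t (fun x => φ j x - ψ x) < ε := by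
  have htm : ∀ k, Measurable (t k) := fun k => (ht.1 k).1.1
  have htp : ∀ k x, 0 < t k x := fun k => (ht.1 k).1.2
  have hφm : ∀ k, Measurable (φ k) := fun k => (hφ k).1.1
  obtain ⟨ψ, u, hψ, hu, hlim⟩ := exists_limit φ hφm (by
    intro y η hη hη'
    obtain ⟨L, hL, hL', hLc⟩ := local_control (l := l) (q := q) (r := r) hp htm htp y
    obtain ⟨ρ, hρ, hρc⟩ := meas_small (volume.restrict (Metric.ball y (1/2))) hr η hη hη'
    obtain ⟨N, hN⟩ := hCauchy (L * ρ) (ENNReal.mul_pos hL.ne' hρ.ne')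
    filter_upwards [eventually_ge_atTop N] with M hM i hi j hj
    refine hρc _ ((hφm i).sub (hφm j)) ?_
    have h1 := (hLc (fun x => φ i x - φ j x)).trans_lt (hN i (hM.trans hi) j (hM.trans hj))
    exact lt_of_mul_lt_mul_left' h1)
  have conv : ∀ ε : ℝ≥0∞, 0 < ε → ∃ N : ℕ, ∀ j ≥ N,
        tildeBnorm n l p q r t (fun x => φ j x - ψ x) < ε := by
    intro ε hε
    have hε' : 0 < min ε 1 := lt_min hε one_pos
    have hεt : min ε 1 ≠ ∞ := ((min_le_right _ _).trans_lt one_lt_top).ne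
    obtain ⟨N, hN⟩ := hCauchy (min ε 1 / 2 / 2)
      (ENNReal.half_pos (ENNReal.half_pos hε'.ne').ne')
    refine ⟨N, fun j hj => ?_⟩
    have h1 := tildeBnorm_fatou (l := l) (t := t) hp hq hr htm 
      (fun k x => φ j x - φ (u k) x) (fun k => (hφm j).sub (hφm (u k))) 
      (fun x => φ j x - ψ x) (hlim.mono fun x hx => hx.const_sub _)
    have h2 : liminf (fun k => tildeBnorm n l p q r t (fun x => φ j x - φ (u k) x)) atTop
        ≤ min ε 1 / 2 / 2 := by
      refine liminf_le_of_frequently_le' (Eventually.frequently ?_)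
      filter_upwards [eventually_ge_atTop N] with k hk
      exact (hN j hj (u k) (hk.trans (hu.id_le k))).le
    calc _ ≤ _ := h1
      _ ≤ 2 * (min ε 1 / 2 / 2) := by gcongr
      _ = min ε 1 / 2 := ENNReal.mul_div_cancel (by simp) (by simp)
      _ < min ε 1 := ENNReal.half_lt_self hε'.ne' hεt
      _ ≤ ε := min_le_left _ _
  refine ⟨ψ, ⟨?_, ?_⟩, conv⟩
  · obtain ⟨N, hN⟩ := conv 1 one_pos
    refine memLrLoc_of_balls r ψ hψ fun y => ?_
    obtain ⟨L, hL, hL', hLc⟩ := local_control (l := l) (q := q) (r := r) hp htm htp y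
    have h1 := (hLc _).trans_lt ((hN N le_rfl).trans one_lt_top)
    have h2 : eLpNorm (fun x => φ N x - ψ x) r (volume.restrict (Metric.ball y (1/2))) < ∞ := by
      rw [lt_top_iff_ne_top]
      intro h
      rw [h, ENNReal.mul_top hL.ne'] at h1
      exact lt_irrefl _ h1
    have h3 : eLpNorm (φ N) r (volume.restrict (Metric.ball y (1/2))) < ∞ :=
      (eLpNorm_mono_measure _ (Measure.restrict_mono_set _ Metric.ball_subset_closedBall)).trans_lt
        ((hφ N).1.2 _ (isCompact_closedBall y (1/2)))
    have h4 := eLpNorm_sub_le_const (volume.restrict (Metric.ball y (1/2))) r _ _ (hφm N)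
      ((hφm N).sub hψ)
    simp only [Pi.sub_apply, _root_.sub_sub_cancel] at h4
    exact h4.trans_lt (ENNReal.mul_lt_top (LpAddConst_lt_top r) (ENNReal.add_lt_top.2 ⟨h3, h2⟩))
  · obtain ⟨N, hN⟩ := conv 1 one_pos
    have := tildeBnorm_sub_lt_top (l := l) (t := t) hp hq hr htm (φ N) (fun x => φ N x - ψ x)
      (hφm N) ((hφm N).sub hψ) (hφ N).2 ((hN N le_rfl).trans one_lt_top)
    simpa only [_root_.sub_sub_cancel] using this

end
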